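/- The infinite series identity 10π/√3 = Σ_{j=0}^{∞} (1/4)^j · (2/3)_j / (11/6)_j · (27j² + 42j + 17) / ((j + 1)(3j + 1)) holds, where the sum is over natural numbers j and all quantities are real numbers. -/

import Mathlib

noncomputable def risingFactorial (a : ℝ) (k : ℕ) : ℝ := ∏ i ∈ Finset.range k, (a + i)

/-!
For positive `a`, `b` with `a < b + 1`, the slowly convergent series `∑ 1 / ((a + k) (b + k))` is
the row `n = 0` of a WZ pair, that is, of two arrays `F`, `G` satisfying
`F n k - F (n + 1) k = G n k - G n (k + 1)`. Summing over `k` shows that passing from row `n` to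
row `n + 1` of `F` costs exactly `G n 0`; the row sums tend to `0`, so `∑ G n 0` has the same sum as
the original series, but converges geometrically.

For `b = 1 - a` the original series is the partial fraction expansion of the cotangent, and its sum
is `π cot (π a) / (1 - 2 a)`. The stated identity is the case `a = 1 / 3`; the factor `(1 / 4) ^ k`
comes from the duplication formula for `(2 / 3)_{2 k + 2}`.
-/

open Filter Topology

lemma risingFactorial_zero (a : ℝ) : risingFactorial a 0 = 1 :=
  Finset.prod_range_zero _

lemma risingFactorial_succ (a : ℝ) (n : ℕ) :
    risingFactorial a (n + 1) = risingFactorial a n * (a + n) :=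
  Finset.prod_range_succ _ n

lemma risingFactorial_succ_left (a : ℝ) (n : ℕ) :
    risingFactorial a (n + 1) = a * risingFactorial (a + 1) n := by
  simp only [risingFactorial, Finset.prod_range_succ', Nat.cast_add, Nat.cast_one, Nat.cast_zero,
    add_zero, add_assoc, add_comm (1 : ℝ), mul_comm a]

lemma risingFactorial_pos {a : ℝ} (ha : 0 < a) (n : ℕ) : 0 < risingFactorial a n :=
  Finset.prod_pos fun _ _ => by positivity

lemma risingFactorial_two_mul (a : ℝ) (n : ℕ) :
    risingFactorial a (2 * n) =
      4 ^ n * risingFactorial (a / 2) n * risingFactorial ((a + 1) / 2) n := by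
  induction n with
  | zero => simp [risingFactorial_zero]
  | succ n ih =>
    rw [mul_add_one, risingFactorial_succ, risingFactorial_succ, ih, risingFactorial_succ,
      risingFactorial_succ]
    push_cast
    ring

theorem tendsto_sum_range_of_wz {E : Type*} [AddCommGroup E] [TopologicalSpace E]
    [IsTopologicalAddGroup E] [T2Space E] {F G : ℕ → ℕ → E}
    (hwz : ∀ n k, F n k - F (n + 1) k = G n k - G n (k + 1))
    (hF : ∀ n, Summable (F n)) (hF_lim : Tendsto (fun n => ∑' k, F n k) atTop (𝓝 0))
    (hG : ∀ n, Tendsto (G n) atTop (𝓝 0)) :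
    Tendsto (fun N => ∑ n ∈ Finset.range N, G n 0) atTop (𝓝 (∑' k, F 0 k)) := by
  have row_diff (n : ℕ) : G n 0 = ∑' k, F n k - ∑' k, F (n + 1) k := by
    have h_rows := ((hF n).hasSum.sub (hF (n + 1)).hasSum).tendsto_sum_nat
    simp only [hwz, Finset.sum_range_sub'] at h_rows
    simpa using tendsto_nhds_unique ((hG n).const_sub (G n 0)) h_rows
  simp only [row_diff, Finset.sum_range_sub' (fun n => ∑' k, F n k)]
  simpa using hF_lim.const_sub (∑' k, F 0 k)

lemma summable_one_div_add_mul_add {a b : ℝ} (ha : 0 < a) (hb : 0 < b) :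
    Summable fun k : ℕ => 1 / ((a + k) * (b + k)) := by
  have h_sq : Summable fun k : ℕ => 1 / |(k : ℝ) + min a b| ^ (2 : ℝ) :=
    (Real.summable_one_div_nat_add_rpow _ _).2 one_lt_two
  refine h_sq.of_nonneg_of_le (fun k => by positivity) fun k => ?_
  rw [abs_of_pos (by positivity), Real.rpow_two, sq, add_comm (k : ℝ)]
  gcongr
  exacts [min_le_left a b, min_le_right a b]

section WZPair

/-- The hypergeometric factor `(1 + b - a)_n (b)_{n + k} / (b)_{2 n + k}` of the WZ pair. -/
noncomputable def wzRatio (a b : ℝ) (n k : ℕ) : ℝ :=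
  risingFactorial (1 + b - a) n * risingFactorial b (n + k) / risingFactorial b (2 * n + k)

/-- The first member of the WZ pair; its row `n = 0` is the series `∑ 1 / ((a + k) (b + k))` to be
accelerated. -/
noncomputable def wzF (a b : ℝ) (n k : ℕ) : ℝ :=
  wzRatio a b n k / ((a + n + k) * (b + 2 * n + k))

/-- The second member of the WZ pair, as a rational multiple of the first; its column `k = 0` is
the accelerated series. -/
noncomputable def wzG (a b : ℝ) (n k : ℕ) : ℝ :=
  wzF a b n k * ((1 + b - a + n) / (b + 2 * n + k + 1) + (a + n + k) / (n + 1))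

variable {a b : ℝ}

lemma wzRatio_zero_left (a : ℝ) (hb : 0 < b) (k : ℕ) : wzRatio a b 0 k = 1 := by
  simp [wzRatio, risingFactorial_zero, (risingFactorial_pos hb k).ne']

lemma wzF_zero_left (a : ℝ) (hb : 0 < b) (k : ℕ) : wzF a b 0 k = 1 / ((a + k) * (b + k)) := by
  simp [wzF, wzRatio_zero_left a hb]

lemma wzRatio_succ_left (a b : ℝ) (n k : ℕ) :
    wzRatio a b (n + 1) k = wzRatio a b n k *
      ((1 + b - a + n) / (b + 2 * n + k + 1) * ((b + n + k) / (b + 2 * n + k))) := by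
  rw [wzRatio, wzRatio, show n + 1 + k = n + k + 1 by ring,
    show 2 * (n + 1) + k = 2 * n + k + 1 + 1 by ring]
  simp only [risingFactorial_succ]
  push_cast
  rw [div_mul_div_comm, div_mul_div_comm]
  congr 1 <;> ring

lemma wzRatio_succ_right (a b : ℝ) (n k : ℕ) :
    wzRatio a b n (k + 1) = wzRatio a b n k * ((b + n + k) / (b + 2 * n + k)) := by
  rw [wzRatio, wzRatio, ← add_assoc, ← add_assoc, risingFactorial_succ, risingFactorial_succ]
  push_cast
  rw [div_mul_div_comm]
  congr 1 <;> ring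

theorem wzF_sub_wzF_succ (ha : 0 < a) (hb : 0 < b) (n k : ℕ) :
    wzF a b n k - wzF a b (n + 1) k = wzG a b n k - wzG a b n (k + 1) := by
  -- `wzRatio a b n k` divides all four terms, which leaves an identity of rational functions.
  simp only [wzG, wzF, wzRatio_succ_left, wzRatio_succ_right]
  push_cast
  have ha₁ : a + (n + 1) + k ≠ 0 := by positivity
  have ha₂ : a + n + (k + 1) ≠ 0 := by positivity
  have hb₁ : b + 2 * (n + 1) + k ≠ 0 := by positivity
  field_simp
  ring

lemma wzG_eq_div (ha : 0 < a) (hb : 0 < b) (n k : ℕ) :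
    wzG a b n k = risingFactorial (1 + b - a) n * risingFactorial b (n + k) /
      risingFactorial b (2 * n + k + 2) *
        (((1 + b - a + n) * (n + 1) + (a + n + k) * (b + 2 * n + k + 1)) /
          ((a + n + k) * (n + 1))) := by
  have h_den := risingFactorial_pos hb (2 * n + k)
  rw [wzG, wzF, wzRatio, risingFactorial_succ b (2 * n + k + 1), risingFactorial_succ]
  push_cast
  simp only [← add_assoc]
  field_simp

lemma wzRatio_nonneg (hb : 0 < b) (hab : a < b + 1) (n k : ℕ) : 0 ≤ wzRatio a b n k := by
  have h_num := risingFactorial_pos (show 0 < 1 + b - a by linarith) n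
  have h_shift := risingFactorial_pos hb (n + k)
  have h_den := risingFactorial_pos hb (2 * n + k)
  unfold wzRatio
  positivity

lemma wzRatio_le_one (ha : 0 < a) (hb : 0 < b) (hab : a < b + 1) (n k : ℕ) :
    wzRatio a b n k ≤ 1 := by
  induction n with
  | zero => exact (wzRatio_zero_left a hb k).le
  | succ n ih =>
    have hn : (0 : ℝ) ≤ n := n.cast_nonneg
    have hk : (0 : ℝ) ≤ k := k.cast_nonneg
    have h_left : (1 + b - a + n) / (b + 2 * n + k + 1) ≤ 1 :=
      div_le_one_of_le₀ (by linarith [hn, hk]) (by positivity)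
    have h_right : (b + n + k) / (b + 2 * n + k) ≤ 1 :=
      div_le_one_of_le₀ (by linarith [hn, hk]) (by positivity)
    rw [wzRatio_succ_left]
    refine (mul_le_of_le_one_right (wzRatio_nonneg hb hab n k) ?_).trans ih
    exact mul_le_one₀ h_left (by positivity) h_right

lemma wzF_nonneg (ha : 0 < a) (hb : 0 < b) (hab : a < b + 1) (n k : ℕ) : 0 ≤ wzF a b n k := by
  have := wzRatio_nonneg hb hab n k
  unfold wzF
  positivity

lemma wzG_nonneg (ha : 0 < a) (hb : 0 < b) (hab : a < b + 1) (n k : ℕ) : 0 ≤ wzG a b n k := by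
  have := wzF_nonneg ha hb hab n k
  have : 0 < 1 + b - a := by linarith
  unfold wzG
  positivity

lemma wzF_le (ha : 0 < a) (hb : 0 < b) (hab : a < b + 1) (n k : ℕ) :
    wzF a b n k ≤ 1 / ((a + n + k) * (b + 2 * n + k)) := by
  unfold wzF
  gcongr
  exact wzRatio_le_one ha hb hab n k

lemma wzF_le_one_div_add_mul_add (ha : 0 < a) (hb : 0 < b) (hab : a < b + 1) (n k : ℕ) :
    wzF a b n k ≤ 1 / ((a + k) * (b + k)) := by
  refine (wzF_le ha hb hab n k).trans ?_
  have hn : (0 : ℝ) ≤ n := n.cast_nonneg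
  gcongr <;> linarith [hn]

lemma summable_wzF (ha : 0 < a) (hb : 0 < b) (hab : a < b + 1) (n : ℕ) :
    Summable (wzF a b n) :=
  (summable_one_div_add_mul_add ha hb).of_nonneg_of_le (wzF_nonneg ha hb hab n)
    (wzF_le_one_div_add_mul_add ha hb hab n)

lemma tendsto_wzF_atTop (ha : 0 < a) (hb : 0 < b) (hab : a < b + 1) (k : ℕ) :
    Tendsto (fun n => wzF a b n k) atTop (𝓝 0) := by
  have h_bound : Tendsto (fun n : ℕ => 1 / b * (1 / (n : ℝ))) atTop (𝓝 0) := by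
    simpa using tendsto_one_div_atTop_nhds_zero_nat.const_mul (1 / b)
  refine squeeze_zero' (.of_forall fun n => wzF_nonneg ha hb hab n k) ?_ h_bound
  filter_upwards [eventually_gt_atTop 0] with n hn
  have hk : (0 : ℝ) ≤ k := k.cast_nonneg
  have hn' : (0 : ℝ) < n := Nat.cast_pos.2 hn
  rw [one_div_mul_one_div, mul_comm]
  refine (wzF_le ha hb hab n k).trans ?_
  gcongr <;> linarith [hk]

lemma tendsto_tsum_wzF (ha : 0 < a) (hb : 0 < b) (hab : a < b + 1) :
    Tendsto (fun n => ∑' k, wzF a b n k) atTop (𝓝 0) := by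
  have h_bound (n k : ℕ) : ‖wzF a b n k‖ ≤ 1 / ((a + k) * (b + k)) := by
    rw [Real.norm_of_nonneg (wzF_nonneg ha hb hab n k)]
    exact wzF_le_one_div_add_mul_add ha hb hab n k
  simpa using tendsto_tsum_of_dominated_convergence (summable_one_div_add_mul_add ha hb)
    (tendsto_wzF_atTop ha hb hab) (.of_forall h_bound)

lemma wzG_le (ha : 0 < a) (hb : 0 < b) (hab : a < b + 1) (n k : ℕ) :
    wzG a b n k ≤ (1 / a + 1) * (1 / (b + k)) := by
  have hn : (0 : ℝ) ≤ n := n.cast_nonneg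
  have hk : (0 : ℝ) ≤ k := k.cast_nonneg
  have h_frac : (1 + b - a + n) / (b + 2 * n + k + 1) ≤ 1 :=
    div_le_one_of_le₀ (by linarith [hn, hk]) (by positivity)
  calc wzG a b n k
      ≤ 1 / ((a + n + k) * (b + 2 * n + k)) * (1 + (a + n + k) / 1) := by
        have hr : 0 < 1 + b - a := by linarith
        unfold wzG
        gcongr
        exacts [wzF_le ha hb hab n k, le_add_of_nonneg_left hn]
    _ = (1 / (a + n + k) + 1) * (1 / (b + 2 * n + k)) := by field_simp
    _ ≤ (1 / a + 1) * (1 / (b + k)) := by gcongr <;> linarith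

lemma tendsto_wzG_atTop (ha : 0 < a) (hb : 0 < b) (hab : a < b + 1) (n : ℕ) :
    Tendsto (wzG a b n) atTop (𝓝 0) := by
  have h_bound : Tendsto (fun k : ℕ => (1 / a + 1) * (1 / (b + k))) atTop (𝓝 0) := by
    have h_inv : Tendsto (fun k : ℕ => 1 / (b + (k : ℝ))) atTop (𝓝 0) :=
      (tendsto_atTop_add_const_left _ b tendsto_natCast_atTop_atTop).const_div_atTop 1
    simpa using h_inv.const_mul (1 / a + 1)
  exact squeeze_zero (wzG_nonneg ha hb hab n) (wzG_le ha hb hab n) h_bound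

theorem hasSum_wzG (ha : 0 < a) (hb : 0 < b) (hab : a < b + 1) :
    HasSum (fun n => wzG a b n 0) (∑' k : ℕ, 1 / ((a + k) * (b + k))) := by
  rw [hasSum_iff_tendsto_nat_of_nonneg fun n => wzG_nonneg ha hb hab n 0]
  simpa only [wzF_zero_left a hb] using tendsto_sum_range_of_wz (wzF_sub_wzF_succ ha hb)
    (summable_wzF ha hb hab) (tendsto_tsum_wzF ha hb hab) (tendsto_wzG_atTop ha hb hab)

end WZPair

theorem tendsto_sum_range_pi_mul_cot {z : ℂ} (hz : z ∈ Complex.integerComplement) :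
    Tendsto (fun N => ∑ k ∈ Finset.range N, (1 / (z + k) - 1 / (1 - z + k))) atTop
      (𝓝 (Real.pi * Complex.cot (Real.pi * z))) := by
  have h_term (k : ℕ) : 1 / (z + k) - 1 / (1 - z + k) =
      cotTerm z k + (1 / (z + k) - 1 / (z + (k + 1 : ℕ))) := by
    rw [cotTerm, show z - (k + 1) = -(1 - z + k) by ring, one_div_neg_eq_neg_one_div]
    push_cast
    ring
  have h_cot := (summable_cotTerm hz).hasSum.tendsto_sum_nat
  have h_tail : Tendsto (fun N : ℕ => 1 / (z + N)) atTop (𝓝 0) := by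
    simpa [Function.comp_def] using tendsto_inv₀_cobounded.comp
      ((tendsto_const_add_cobounded z).comp tendsto_natCast_atTop_cobounded)
  simp_rw [h_term, Finset.sum_add_distrib (f := cotTerm z),
    Finset.sum_range_sub' (fun k : ℕ => 1 / (z + k))]
  convert h_cot.add (h_tail.const_sub (1 / (z + (0 : ℕ)))) using 2
  rw [sub_eq_iff_eq_add.1 (cot_series_rep' hz), Nat.cast_zero, add_zero, sub_zero]

lemma ofReal_mem_integerComplement {a : ℝ} (ha₀ : 0 < a) (ha₁ : a < 1) :
    (a : ℂ) ∈ Complex.integerComplement := by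
  rintro ⟨m, hm⟩
  obtain rfl : (m : ℝ) = a := by exact_mod_cast hm
  norm_cast at ha₀ ha₁
  omega

theorem hasSum_pi_mul_cot {a : ℝ} (ha₀ : 0 < a) (ha₁ : a < 1) :
    HasSum (fun k : ℕ => (1 - 2 * a) * (1 / ((a + k) * (1 - a + k))))
      (Real.pi * Real.cot (Real.pi * a)) := by
  have hb : 0 < 1 - a := sub_pos.2 ha₁
  rw [((summable_one_div_add_mul_add ha₀ hb).mul_left _).hasSum_iff_tendsto_nat]
  have h_term (k : ℕ) : (1 - 2 * a) * (1 / ((a + k) * (1 - a + k))) =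
      1 / (a + k) - 1 / (1 - a + k) := by
    field_simp
    ring
  simp only [h_term]
  rw [← tendsto_ofReal_iff]
  simpa using tendsto_sum_range_pi_mul_cot (ofReal_mem_integerComplement ha₀ ha₁)

theorem hasSum_wzG_pi_mul_cot {a : ℝ} (ha₀ : 0 < a) (ha₁ : a < 1) :
    HasSum (fun n => (1 - 2 * a) * wzG a (1 - a) n 0) (Real.pi * Real.cot (Real.pi * a)) := by
  rw [← (hasSum_pi_mul_cot ha₀ ha₁).tsum_eq, tsum_mul_left]
  exact (hasSum_wzG ha₀ (sub_pos.2 ha₁) (by linarith)).mul_left _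

lemma risingFactorial_two_thirds_two_mul_add_two (n : ℕ) :
    risingFactorial (2 / 3) (2 * n + 2) =
      10 / 9 * 4 ^ n * risingFactorial (4 / 3) n * risingFactorial (11 / 6) n := by
  rw [← mul_add_one, risingFactorial_two_mul, risingFactorial_succ_left, risingFactorial_succ_left,
    show (2 / 3 / 2 + 1 : ℝ) = 4 / 3 by norm_num,
    show ((2 / 3 + 1) / 2 + 1 : ℝ) = 11 / 6 by norm_num]
  ring

lemma wzG_one_third (n : ℕ) :
    10 / 3 * wzG (1 / 3) (2 / 3) n 0 =
      (1 / 4) ^ n * risingFactorial (2 / 3) n / risingFactorial (11 / 6) n *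
        ((27 * (n : ℝ) ^ 2 + 42 * n + 17) / ((n + 1) * (3 * n + 1))) := by
  have h_num := risingFactorial_pos (show (0 : ℝ) < 4 / 3 by norm_num) n
  rw [wzG_eq_div (by norm_num) (by norm_num), add_zero, add_zero,
    risingFactorial_two_thirds_two_mul_add_two, show (1 : ℝ) + 2 / 3 - 1 / 3 = 4 / 3 by norm_num,
    one_div_pow]
  push_cast
  field_simp
  ring

theorem stmt_18 :
    10 * Real.pi / Real.sqrt 3 =
      ∑' k : ℕ, (1/4 : ℝ) ^ k * (risingFactorial (2/3) k) /
        (risingFactorial (11/6) k) * ((27 * (k:ℝ)^2 + 42 * (k:ℝ) + 17) / (((k:ℝ) + 1) * (3 * (k:ℝ) + 1))) := by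
  have h_cot : Real.cot (Real.pi * (1 / 3)) = 1 / Real.sqrt 3 := by
    rw [mul_one_div, Real.cot_eq_cos_div_sin, Real.cos_pi_div_three, Real.sin_pi_div_three]
    field_simp
  have h_sum : HasSum (fun n => 1 / 3 * wzG (1 / 3) (2 / 3) n 0) (Real.pi / Real.sqrt 3) := by
    convert hasSum_wzG_pi_mul_cot (a := 1 / 3) (by norm_num) (by norm_num) using 1
    · norm_num
    · rw [h_cot, mul_one_div]
  simp only [← wzG_one_third]
  rw [mul_div_assoc, ← (h_sum.mul_left 10).tsum_eq]
  exact tsum_congr fun n => by ring
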